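/- arXiv:2404.18690 — 2 statements merged into one kernel-verified Lean document; each statement's English description precedes it below -/
import Mathlib

section
/- Suppose the pair (𝒫,𝒟) satisfies conditions (T1)–(T3). Fix σ ∈ {−1,1}^ℕ, an admissible α, k ∈ ℕ, and an integer n ≥ k+1, and set h(k,n) = (∏_{i=k+1}^{n−1} 1/Φ(i)) · (∏_{j=1}^{k} 1/Φ(j) + 1). Then every λ ∈ Λ_k^{σ,α} satisfies |λ| ≤ P_k, and for all ξ with |ξ| ≤ 1 and all λ ∈ Λ_k^{σ,α}: (i) if Φ(n) = N_n then (N_n/P_n)|ξ+λ| ≤ h(k,n)/2; (ii) if Φ(n) = 2 then (d_n/P_n)|ξ+λ| ≤ h(k,n); (iii) if Φ(n) = 3 then (|a_n + b_n|/P_n)|ξ+λ| ≤ (4/3)h(k,n) and (|a_n − b_n|/P_n)|ξ+λ| ≤ (4/3)h(k,n). -/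
open MeasureTheory Filter Finset Real
open scoped ENNReal NNReal

noncomputable section

/-- `P n = p 1 * p 2 * ⋯ * p n`. -/
def Pprod (p : ℕ → ℕ) (n : ℕ) : ℕ := ∏ i ∈ Finset.Icc 1 n, p i

/-- The uniform probability measure on the finite set `s • E ⊆ ℝ`. -/
def unifD (E : Finset ℕ) (s : ℝ) : Measure ℝ :=
  (E.card : ℝ≥0∞)⁻¹ • ∑ d ∈ E, Measure.dirac (s * (d : ℝ))

/-- The finite convolutions `μ_n = δ_{P₁⁻¹D₁} ∗ ⋯ ∗ δ_{Pₙ⁻¹Dₙ}`. -/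
def muN (p : ℕ → ℕ) (D : ℕ → Finset ℕ) : ℕ → Measure ℝ
  | 0 => Measure.dirac 0
  | n + 1 => Measure.conv (muN p D n) (unifD (D (n + 1)) ((Pprod p (n + 1) : ℝ)⁻¹))

/-- `μ` is the weak limit of the sequence of measures `ν n`. -/
def IsWeakLimit (ν : ℕ → Measure ℝ) (μ : Measure ℝ) : Prop :=
  ∀ f : BoundedContinuousFunction ℝ ℝ,
    Tendsto (fun n => ∫ x, f x ∂ν n) atTop (nhds (∫ x, f x ∂μ))

/-- `μ` is the Moran measure attached to `(p, D)`: the infinite convolution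
`δ_{P₁⁻¹D₁} ∗ δ_{P₂⁻¹D₂} ∗ ⋯`, in the sense of weak convergence. -/
def IsMoran (p : ℕ → ℕ) (D : ℕ → Finset ℕ) (μ : Measure ℝ) : Prop :=
  IsProbabilityMeasure μ ∧ IsWeakLimit (muN p D) μ

/-- The exponentials `e_λ, λ ∈ Λ` are pairwise orthogonal in `L²(μ)`. -/
def IsOrthSet (μ : Measure ℝ) (Λ : Set ℝ) : Prop :=
  ∀ l ∈ Λ, ∀ l' ∈ Λ, l ≠ l' →
    ∫ x : ℝ, Complex.exp (2 * Real.pi * Complex.I * (l - l') * x) ∂μ = 0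

/-- `Λ` is a spectrum of `μ`: the exponentials `e_λ, λ ∈ Λ` form an orthonormal
basis of `L²(μ)` (orthonormal + maximal, i.e. complete). -/
def IsSpectrum (μ : Measure ℝ) (Λ : Set ℝ) : Prop :=
  IsOrthSet μ Λ ∧
  ∀ f : ℝ → ℂ, MemLp f 2 μ →
    (∀ l ∈ Λ, ∫ x : ℝ, f x * Complex.exp (-(2 * Real.pi * Complex.I * l * x)) ∂μ = 0) →
    f =ᵐ[μ] 0

def IsSpectralMeasure (μ : Measure ℝ) : Prop := ∃ Λ : Set ℝ, Λ.Countable ∧ IsSpectrum μ Λ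

/-- Condition (T1): `D n = {0,1,…,N-1}` with `3 < N`, `N ∣ p n`, `N < p n`. -/
def T1cond (p : ℕ → ℕ) (D : ℕ → Finset ℕ) (n : ℕ) : Prop :=
  ∃ N : ℕ, 3 < N ∧ N ∣ p n ∧ N < p n ∧ D n = Finset.range N

/-- Condition (T2) (except for the global sup condition): `D n = {0,a,b}`,
`0 < a < b`, `gcd(a,b) = 1`, `{a,b} ≡ {1,2} (mod 3)`, `3 ∣ p n`. -/
def T2cond (p : ℕ → ℕ) (D : ℕ → Finset ℕ) (n : ℕ) : Prop :=
  ∃ a b : ℕ, 0 < a ∧ a < b ∧ Nat.gcd a b = 1 ∧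
    (a % 3 = 1 ∧ b % 3 = 2 ∨ a % 3 = 2 ∧ b % 3 = 1) ∧ 3 ∣ p n ∧
    D n = ({0, a, b} : Finset ℕ)

/-- Condition (T3): `D n = {0,d}` with `0 < d < p n` and `p n / gcd (d, p n)` even.
(The decomposition `d = 2^l d'` with `d'` odd always exists, with `l` the 2-adic
valuation of `d`.) -/
def T3cond (p : ℕ → ℕ) (D : ℕ → Finset ℕ) (n : ℕ) : Prop :=
  ∃ d : ℕ, 0 < d ∧ d < p n ∧ 2 ∣ p n / Nat.gcd d (p n) ∧ D n = ({0, d} : Finset ℕ)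

/-- The pair `(p, D)` satisfies conditions (T1)–(T3), including the requirement
`sup {b n / p n : n of type (T2)} < 2/3`. -/
def SatisfiesT (p : ℕ → ℕ) (D : ℕ → Finset ℕ) : Prop :=
  (∀ n, 1 ≤ n → T1cond p D n ∨ T2cond p D n ∨ T3cond p D n) ∧
  ∃ c : ℝ, c < 2 / 3 ∧ ∀ n, 1 ≤ n → T2cond p D n → (((D n).sup id : ℕ) : ℝ) / (p n : ℝ) ≤ c

/-- `σ ∈ {-1,1}^ℕ`. -/
def IsSigma (σ : ℕ → ℤ) : Prop := ∀ n, σ n = 1 ∨ σ n = -1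

/-- `α` is admissible: `α m ∈ {-⌊N/2⌋, …, N - 1 - ⌊N/2⌋}` where `N = #(D m)`,
for every `m` with `#(D m) = N_m > 3`. -/
def Admissible (D : ℕ → Finset ℕ) (α : ℕ → ℤ) : Prop :=
  ∀ m, 1 ≤ m → 3 < (D m).card →
    -(((D m).card / 2 : ℕ) : ℤ) ≤ α m ∧
      α m ≤ ((D m).card : ℤ) - 1 - (((D m).card / 2 : ℕ) : ℤ)

/-- The largest element `d n` (resp. `b n`) of `D n`. -/
def bOf (D : ℕ → Finset ℕ) (n : ℕ) : ℕ := (D n).sup id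

/-- The middle element `a n` of a digit set `{0, a, b}`. -/
def aOf (D : ℕ → Finset ℕ) (n : ℕ) : ℕ := (((D n).erase 0).erase ((D n).sup id)).sup id

/-- `l n`: the 2-adic valuation of `d n`, i.e. `d n = 2^(l n) * d'` with `d'` odd. -/
def lOf (D : ℕ → Finset ℕ) (n : ℕ) : ℕ := padicValNat 2 ((D n).sup id)

/-- The finite set `Λ_n^{σ,α}`. -/
def LamN (p : ℕ → ℕ) (D : ℕ → Finset ℕ) (σ α : ℕ → ℤ) (n : ℕ) : Set ℝ :=
  { x | ∃ c : ℕ → ℝ,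
      (∀ i, (D i).card = 2 → c i = 0 ∨ c i = (σ i : ℝ) / 2 ^ (1 + lOf D i)) ∧
      (∀ i, (D i).card = 3 → c i = 0 ∨ c i = 1 / 3 ∨ c i = -(1 / 3)) ∧
      (∀ i, 3 < (D i).card → c i = (α i : ℝ) / ((D i).card : ℝ)) ∧
      x = ∑ i ∈ Finset.Icc 1 n, (Pprod p i : ℝ) * c i }

/-- `Λ^{σ,α} = ⋃_{n ≥ 1} Λ_n^{σ,α}`. -/
def Lam (p : ℕ → ℕ) (D : ℕ → Finset ℕ) (σ α : ℕ → ℤ) : Set ℝ :=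
  ⋃ n ∈ Set.Ici 1, LamN p D σ α n

/-- The Fourier transform `μ̂(ξ) = ∫ e^{-2πixξ} dμ(x)`. -/
def FT (μ : Measure ℝ) (ξ : ℝ) : ℂ :=
  ∫ x : ℝ, Complex.exp (-(2 * Real.pi * Complex.I * x * ξ)) ∂μ

/-- The mask polynomial `m_E(t) = (1/#E) ∑_{d ∈ E} e^{2πidt}`. -/
def mask (E : Finset ℕ) (t : ℝ) : ℂ :=
  (E.card : ℂ)⁻¹ * ∑ d ∈ E, Complex.exp (2 * Real.pi * Complex.I * (d : ℝ) * t)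

end

noncomputable section

/-- `h(k,n) = (∏_{i=k+1}^{n-1} 1/Φ(i)) (∏_{j=1}^{k} 1/Φ(j) + 1)`. -/
def hFactor (D : ℕ → Finset ℕ) (k n : ℕ) : ℝ :=
  (∏ i ∈ Finset.Icc (k + 1) (n - 1), ((D i).card : ℝ)⁻¹) *
    ((∏ j ∈ Finset.Icc 1 k, ((D j).card : ℝ)⁻¹) + 1)

lemma Pprod_succ' (p : ℕ → ℕ) (n : ℕ) : Pprod p (n + 1) = Pprod p n * p (n + 1) := by
  unfold Pprod
  exact Finset.prod_Icc_succ_top (by omega) _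

lemma Pprod_pos' (p : ℕ → ℕ) (hp : ∀ m, 1 ≤ m → 1 < p m) (n : ℕ) : 0 < Pprod p n := by
  unfold Pprod
  apply Finset.prod_pos
  intro i hi
  have := hp i (Finset.mem_Icc.1 hi).1
  omega

lemma card_T2' {p : ℕ → ℕ} {D : ℕ → Finset ℕ} {n : ℕ} (h : T2cond p D n) :
    (D n).card = 3 := by
  obtain ⟨a, b, ha, hab, -, -, -, hD⟩ := h
  rw [hD]
  apply Finset.card_eq_three.2
  exact ⟨0, a, b, by omega, by omega, by omega, rfl⟩

lemma card_T3' {p : ℕ → ℕ} {D : ℕ → Finset ℕ} {n : ℕ} (h : T3cond p D n) :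
    (D n).card = 2 := by
  obtain ⟨d, hd, -, -, hD⟩ := h
  rw [hD]
  exact Finset.card_pair (by omega)

lemma card_bounds' {p : ℕ → ℕ} {D : ℕ → Finset ℕ}
    (hp : ∀ m, 1 ≤ m → 1 < p m) (hT : SatisfiesT p D) (n : ℕ) (hn : 1 ≤ n) :
    2 ≤ (D n).card ∧ (D n).card ≤ p n := by
  have hpn := hp n hn
  rcases hT.1 n hn with h | h | h
  · obtain ⟨N, h3, -, hlt, hD⟩ := h
    rw [hD, Finset.card_range]
    omega
  · rw [card_T2' h]
    obtain ⟨a, b, -, -, -, -, h3, -⟩ := h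
    have := Nat.le_of_dvd (by omega) h3
    omega
  · rw [card_T3' h]
    omega

lemma coef_bound' {D : ℕ → Finset ℕ} {σ α : ℕ → ℤ} (hσ : IsSigma σ) (hα : Admissible D α)
    (c : ℕ → ℝ)
    (h2 : ∀ i, (D i).card = 2 → c i = 0 ∨ c i = (σ i : ℝ) / 2 ^ (1 + lOf D i))
    (h3 : ∀ i, (D i).card = 3 → c i = 0 ∨ c i = 1 / 3 ∨ c i = -(1 / 3))
    (h4 : ∀ i, 3 < (D i).card → c i = (α i : ℝ) / ((D i).card : ℝ))
    (i : ℕ) (hi : 1 ≤ i) (hc : 2 ≤ (D i).card) : |c i| ≤ 1 / 2 := by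
  rcases (by omega : (D i).card = 2 ∨ (D i).card = 3 ∨ 3 < (D i).card) with h | h | h
  · rcases h2 i h with h | h
    · rw [h]; norm_num
    · have hs : |(σ i : ℝ)| = 1 := by
        rcases hσ i with h | h <;> rw [h] <;> norm_num
      rw [h, abs_div, hs, abs_of_pos (by positivity)]
      apply one_div_le_one_div_of_le (by norm_num)
      rw [pow_add, pow_one]
      have : (1 : ℝ) ≤ 2 ^ lOf D i := one_le_pow₀ (by norm_num)
      linarith
  · rcases h3 i h with h | h | h <;> rw [h] <;> norm_num [abs_of_pos]
  · rw [h4 i h]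
    obtain ⟨hl, hu⟩ := hα i hi h
    have hN : (0 : ℝ) < (D i).card := by
      have : 0 < (D i).card := by omega
      exact_mod_cast this
    rw [abs_div, abs_of_pos hN, div_le_iff₀ hN]
    have e1 : -((D i).card : ℤ) ≤ 2 * α i := by omega
    have e2 : 2 * α i ≤ ((D i).card : ℤ) := by omega
    have e1' : -((D i).card : ℝ) ≤ 2 * (α i : ℝ) := by exact_mod_cast e1
    have e2' : 2 * (α i : ℝ) ≤ ((D i).card : ℝ) := by exact_mod_cast e2
    rw [abs_le]
    constructor <;> linarith

lemma sum_bound' {p : ℕ → ℕ} (hp : ∀ m, 1 ≤ m → 1 < p m) (c : ℕ → ℝ)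
    (hc : ∀ i, 1 ≤ i → |c i| ≤ 1 / 2) (k : ℕ) :
    |∑ i ∈ Finset.Icc 1 k, (Pprod p i : ℝ) * c i| ≤ (Pprod p k : ℝ) := by
  induction k with
  | zero => simp
  | succ k ih =>
    rw [Finset.sum_Icc_succ_top (by omega)]
    refine (abs_add_le _ _).trans ?_
    have hP : (0 : ℝ) < Pprod p k := by exact_mod_cast Pprod_pos' p hp k
    have hP' : (0 : ℝ) ≤ Pprod p (k + 1) := by positivity
    have h2 : (2 : ℝ) ≤ p (k + 1) := by exact_mod_cast hp (k + 1) (by omega)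
    rw [abs_mul, abs_of_nonneg hP']
    have h3 := mul_le_mul_of_nonneg_left (hc (k + 1) (by omega)) hP'
    have h4 : (2 : ℝ) * Pprod p k ≤ Pprod p (k + 1) := by
      rw [Pprod_succ']
      push_cast
      nlinarith
    linarith

lemma hFactor_bound' {p : ℕ → ℕ} {D : ℕ → Finset ℕ}
    (hp : ∀ m, 1 ≤ m → 1 < p m) (hT : SatisfiesT p D) (k m : ℕ) :
    1 + (Pprod p k : ℝ) ≤ hFactor D k (k + m + 1) * (Pprod p (k + m) : ℝ) := by
  have key : ∀ i, 1 ≤ i → 1 ≤ ((D i).card : ℝ)⁻¹ * (p i : ℝ) := by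
    intro i hi
    obtain ⟨h1, h2⟩ := card_bounds' hp hT i hi
    have h1' : (2 : ℝ) ≤ (D i).card := by exact_mod_cast h1
    have h2' : ((D i).card : ℝ) ≤ p i := by exact_mod_cast h2
    rw [inv_mul_eq_div, le_div_iff₀ (by linarith)]
    linarith
  induction m with
  | zero =>
    have : 1 ≤ (∏ j ∈ Finset.Icc 1 k, ((D j).card : ℝ)⁻¹) * (Pprod p k : ℝ) := by
      unfold Pprod
      push_cast
      rw [← Finset.prod_mul_distrib]
      calc (1 : ℝ) = ∏ i ∈ Finset.Icc 1 k, (1 : ℝ) := by simp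
        _ ≤ _ := Finset.prod_le_prod (fun _ _ => zero_le_one)
          (fun i hi => key i (Finset.mem_Icc.1 hi).1)
    simp only [hFactor, add_zero, Nat.add_sub_cancel]
    rw [Finset.Icc_eq_empty (by omega), Finset.prod_empty]
    linarith
  | succ m ih =>
    have e : hFactor D k (k + (m + 1) + 1)
        = hFactor D k (k + m + 1) * ((D (k + m + 1)).card : ℝ)⁻¹ := by
      simp only [hFactor, Nat.add_sub_cancel]
      rw [← add_assoc, Finset.prod_Icc_succ_top (by omega)]
      ring
    rw [e, ← add_assoc, Pprod_succ']
    push_cast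
    have h1 := key (k + m + 1) (by omega)
    have h0 : (0 : ℝ) ≤ 1 + Pprod p k := by positivity
    calc 1 + (Pprod p k : ℝ) ≤ hFactor D k (k + m + 1) * (Pprod p (k + m) : ℝ) := ih
      _ ≤ (hFactor D k (k + m + 1) * (Pprod p (k + m) : ℝ)) *
          (((D (k + m + 1)).card : ℝ)⁻¹ * (p (k + m + 1) : ℝ)) :=
        le_mul_of_one_le_right (h0.trans ih) h1
      _ = _ := by ring

lemma main_step' {p : ℕ → ℕ} {D : ℕ → Finset ℕ}
    (hp : ∀ m, 1 ≤ m → 1 < p m) (hT : SatisfiesT p D) (k n : ℕ) (hkn : k + 1 ≤ n)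
    (x q r : ℝ) (hx : |x| ≤ 1 + (Pprod p k : ℝ)) (hr : 0 ≤ r) (hq : q ≤ r * (p n : ℝ)) :
    q / (Pprod p n : ℝ) * |x| ≤ r * hFactor D k n := by
  obtain ⟨m, rfl⟩ : ∃ m, n = k + m + 1 := ⟨n - k - 1, by omega⟩
  have hb := hx.trans (hFactor_bound' hp hT k m)
  have hP : (0 : ℝ) < Pprod p (k + m) := by exact_mod_cast Pprod_pos' p hp (k + m)
  have hpn : (0 : ℝ) < p (k + m + 1) := by
    have := hp (k + m + 1) (by omega)
    exact_mod_cast (by omega : 0 < p (k + m + 1))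
  rw [Pprod_succ', div_mul_eq_mul_div, div_le_iff₀ (by push_cast; positivity)]
  push_cast
  calc q * |x| ≤ (r * (p (k + m + 1) : ℝ)) * |x| :=
        mul_le_mul_of_nonneg_right hq (abs_nonneg x)
    _ ≤ (r * (p (k + m + 1) : ℝ)) * (hFactor D k (k + m + 1) * (Pprod p (k + m) : ℝ)) :=
        mul_le_mul_of_nonneg_left hb (by positivity)
    _ = _ := by ring

/-- Proposition 2.4. Every `λ ∈ Λ_k^{σ,α}` satisfies `|λ| ≤ P_k`,
and for `|ξ| ≤ 1`, `λ ∈ Λ_k^{σ,α}` and `n ≥ k+1` one has the bounds (i)–(iii). -/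
theorem lamK_bounds (p : ℕ → ℕ) (D : ℕ → Finset ℕ)
    (hp : ∀ m, 1 ≤ m → 1 < p m) (hT : SatisfiesT p D)
    (σ α : ℕ → ℤ) (hσ : IsSigma σ) (hα : Admissible D α)
    (k n : ℕ) (hkn : k + 1 ≤ n) :
    (∀ l ∈ LamN p D σ α k, |l| ≤ (Pprod p k : ℝ)) ∧
    ∀ ξ : ℝ, |ξ| ≤ 1 → ∀ l ∈ LamN p D σ α k,
      (3 < (D n).card →
        ((D n).card : ℝ) / (Pprod p n : ℝ) * |ξ + l| ≤ hFactor D k n / 2) ∧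
      ((D n).card = 2 →
        (bOf D n : ℝ) / (Pprod p n : ℝ) * |ξ + l| ≤ hFactor D k n) ∧
      ((D n).card = 3 →
        ((aOf D n : ℝ) + (bOf D n : ℝ)) / (Pprod p n : ℝ) * |ξ + l| ≤
            4 / 3 * hFactor D k n ∧
          ((bOf D n : ℝ) - (aOf D n : ℝ)) / (Pprod p n : ℝ) * |ξ + l| ≤
            4 / 3 * hFactor D k n) := by
  have hlam : ∀ l ∈ LamN p D σ α k, |l| ≤ (Pprod p k : ℝ) := by
    rintro l ⟨c, h2, h3, h4, rfl⟩
    exact sum_bound' hp c (fun i hi => coef_bound' hσ hα c h2 h3 h4 i hi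
      (card_bounds' hp hT i hi).1) k
  refine ⟨hlam, fun ξ hξ l hl => ?_⟩
  have hx : |ξ + l| ≤ 1 + (Pprod p k : ℝ) :=
    (abs_add_le _ _).trans (add_le_add hξ (hlam l hl))
  have hn : 1 ≤ n := by omega
  have hpn : (0 : ℝ) < p n := by
    have := hp n hn
    exact_mod_cast (by omega : 0 < p n)
  refine ⟨fun h => ?_, fun h => ?_, fun h => ?_⟩
  · have hq : ((D n).card : ℝ) ≤ 1 / 2 * (p n : ℝ) := by
      rcases hT.1 n hn with h' | h' | h'
      · obtain ⟨N, h3, ⟨t, ht⟩, hlt, hD⟩ := h'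
        rw [hD, Finset.card_range]
        have ht2 : 2 ≤ t := by
          by_contra hcon
          have : t ≤ 1 := by omega
          nlinarith
        have : N * 2 ≤ p n := by rw [ht]; exact Nat.mul_le_mul_left N ht2
        have : (N : ℝ) * 2 ≤ p n := by exact_mod_cast this
        linarith
      · have := card_T2' h'
        omega
      · have := card_T3' h'
        omega
    have := main_step' hp hT k n hkn (ξ + l) _ (1 / 2) hx (by norm_num) hq
    linarith
  · have hq : (bOf D n : ℝ) ≤ 1 * (p n : ℝ) := by
      rcases hT.1 n hn with h' | h' | h'
      · obtain ⟨N, h3, -, -, hD⟩ := h'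
        rw [hD, Finset.card_range] at h
        omega
      · have := card_T2' h'
        omega
      · obtain ⟨d, hd, hdp, -, hD⟩ := h'
        have : bOf D n = d := by simp [bOf, hD]
        rw [this, one_mul]
        exact_mod_cast hdp.le
    have := main_step' hp hT k n hkn (ξ + l) _ 1 hx (by norm_num) hq
    linarith
  · have hb : (bOf D n : ℝ) ≤ 2 / 3 * (p n : ℝ) := by
      rcases hT.1 n hn with h' | h' | h'
      · obtain ⟨N, h3, -, -, hD⟩ := h'
        rw [hD, Finset.card_range] at h
        omega
      · obtain ⟨c, hc, hsup⟩ := hT.2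
        have := (hsup n hn h').trans hc.le
        rwa [div_le_iff₀ hpn] at this
      · have := card_T3' h'
        omega
    have ha : (aOf D n : ℝ) ≤ (bOf D n : ℝ) := by
      have : aOf D n ≤ bOf D n :=
        Finset.sup_mono ((Finset.erase_subset _ _).trans (Finset.erase_subset _ _))
      exact_mod_cast this
    have ha0 : (0 : ℝ) ≤ (aOf D n : ℝ) := by positivity
    exact ⟨main_step' hp hT k n hkn (ξ + l) _ (4 / 3) hx (by norm_num) (by linarith),
      main_step' hp hT k n hkn (ξ + l) _ (4 / 3) hx (by norm_num) (by linarith)⟩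

end
end

section
/- Let p_n = 2 for all n ≥ 1, 𝒟_1 = {0,1,2}, 𝒟_2 = {0,5,6}, and 𝒟_n = {0,3} for all n ≥ 3. Then the Moran measure μ_{(p_n),(𝒟_n)} = δ_{2^{-1}{0,1,2}} * δ_{4^{-1}{0,5,6}} * δ_{8^{-1}{0,3}} * δ_{16^{-1}{0,3}} * ⋯ is not a spectral measure. -/
open MeasureTheory Filter Finset Real
open scoped ENNReal NNReal

noncomputable section

open scoped Topology

lemma ex_unifD_finite (E : Finset ℕ) (hE : E.Nonempty) (s : ℝ) : IsFiniteMeasure (unifD E s) := by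
  unfold unifD
  refine Measure.smul_finite _ ?_
  simp [hE.ne_empty]

lemma ex_charFun_unifD (E : Finset ℕ) (s t : ℝ) :
    charFun (unifD E s) t
      = (E.card : ℂ)⁻¹ * ∑ d ∈ E, Complex.exp ((t : ℂ) * ((s : ℂ) * (d : ℂ)) * Complex.I) := by
  rw [charFun_apply_real]
  unfold unifD
  rw [integral_smul_measure, integral_finsetSum_measure]
  · simp [integral_dirac]
  · intro i _
    exact integrable_dirac (by simp [enorm_lt_top])

lemma ex_muN_finite (p : ℕ → ℕ) (D : ℕ → Finset ℕ) (h : ∀ n, 1 ≤ n → (D n).Nonempty) (n : ℕ) :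
    IsFiniteMeasure (muN p D n) := by
  induction n with
  | zero => unfold muN; infer_instance
  | succ k ih =>
    have := ex_unifD_finite (D (k+1)) (h _ (by omega)) ((Pprod p (k + 1) : ℝ)⁻¹)
    unfold muN
    infer_instance

lemma ex_charFun_split (ν : Measure ℝ) [IsFiniteMeasure ν] (t : ℝ) :
    charFun ν t = ((∫ x, Real.cos (t * x) ∂ν : ℝ) : ℂ) + ((∫ x, Real.sin (t * x) ∂ν : ℝ) : ℂ) * Complex.I := by
  rw [charFun_apply_real, ← integral_complex_ofReal, ← integral_complex_ofReal, ← integral_mul_const,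
    ← integral_add]
  · congr 1
    ext x
    rw [Complex.exp_mul_I]
    push_cast
    rfl
  · refine (integrable_const (1 : ℝ)).mono (by fun_prop) (ae_of_all _ fun x => ?_)
    rw [Complex.norm_real]
    simpa using Real.abs_cos_le_one _
  · refine (integrable_const (1 : ℝ)).mono (by fun_prop) (ae_of_all _ fun x => ?_)
    rw [norm_mul, Complex.norm_real]
    simpa using Real.abs_sin_le_one _

lemma ex_charFun_tendsto (ν : ℕ → Measure ℝ) (μ : Measure ℝ) [∀ n, IsFiniteMeasure (ν n)]
    [IsFiniteMeasure μ] (h : IsWeakLimit ν μ) (t : ℝ) :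
    Tendsto (fun n => charFun (ν n) t) atTop (𝓝 (charFun μ t)) := by
  simp_rw [ex_charFun_split]
  have h1 := h (BoundedContinuousFunction.ofNormedAddCommGroup (fun x => Real.cos (t * x))
    (by fun_prop) 1 (fun x => Real.abs_cos_le_one _))
  have h2 := h (BoundedContinuousFunction.ofNormedAddCommGroup (fun x => Real.sin (t * x))
    (by fun_prop) 1 (fun x => Real.abs_sin_le_one _))
  simp only [BoundedContinuousFunction.coe_ofNormedAddCommGroup] at h1 h2
  exact ((Complex.continuous_ofReal.tendsto _).comp h1).add
    (((Complex.continuous_ofReal.tendsto _).comp h2).mul_const _)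

/-- The value of the first two factors. -/
def exM (u : ℂ) : ℂ := (1 + u ^ 2 + u ^ 4) * (1 + u ^ 5 + u ^ 6) / 9

lemma ex_Pprod (p : ℕ → ℕ) (hp : ∀ n, 1 ≤ n → p n = 2) (n : ℕ) : Pprod p n = 2 ^ n := by
  unfold Pprod
  rw [Finset.prod_congr rfl (fun i hi => hp i (Finset.mem_Icc.1 hi).1)]
  simp

lemma ex_exp_pow (t : ℝ) (n : ℕ) (z : ℂ) (h : z = n * (t / 4 * Complex.I)) :
    Complex.exp z = Complex.exp (t / 4 * Complex.I) ^ n := by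
  rw [h, Complex.exp_nat_mul]

lemma ex_charFun_two (p : ℕ → ℕ) (D : ℕ → Finset ℕ)
    (hp : ∀ n, 1 ≤ n → p n = 2)
    (hD1 : D 1 = ({0, 1, 2} : Finset ℕ)) (hD2 : D 2 = ({0, 5, 6} : Finset ℕ)) (t : ℝ) :
    charFun (muN p D 2) t = exM (Complex.exp (t / 4 * Complex.I)) := by
  have f1 := ex_unifD_finite (D (0+1)) (by simp [hD1]) ((Pprod p (0+1) : ℝ)⁻¹)
  have f2 := ex_unifD_finite (D (1+1)) (by simp [hD2]) ((Pprod p (1+1) : ℝ)⁻¹)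
  have e2 : muN p D 2 = (Measure.dirac 0 ∗ unifD (D (0+1)) ((Pprod p (0+1) : ℝ)⁻¹)) ∗
      unifD (D (1+1)) ((Pprod p (1+1) : ℝ)⁻¹) := rfl
  rw [e2, charFun_conv, charFun_conv, ex_charFun_unifD, ex_charFun_unifD]
  simp only [zero_add, Nat.reduceAdd, hD1, hD2, ex_Pprod p hp]
  have g1 : ∀ d : ℕ, Complex.exp ((t : ℂ) * (((((2 ^ 1 : ℕ) : ℝ)⁻¹ : ℝ) : ℂ) * (d : ℂ)) * Complex.I)
      = Complex.exp (t / 4 * Complex.I) ^ (2 * d) := fun d =>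
    ex_exp_pow t _ _ (by push_cast; ring)
  have g2 : ∀ d : ℕ, Complex.exp ((t : ℂ) * (((((2 ^ 2 : ℕ) : ℝ)⁻¹ : ℝ) : ℂ) * (d : ℂ)) * Complex.I)
      = Complex.exp (t / 4 * Complex.I) ^ d := fun d =>
    ex_exp_pow t _ _ (by push_cast; ring)
  simp_rw [g1, g2]
  rw [Finset.sum_insert (by simp), Finset.sum_insert (by simp), Finset.sum_insert (by simp),
    Finset.sum_insert (by simp), Finset.sum_singleton, Finset.sum_singleton]
  simp [exM]
  ring

lemma ex_charFun_tel (p : ℕ → ℕ) (D : ℕ → Finset ℕ)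
    (hp : ∀ n, 1 ≤ n → p n = 2)
    (hD1 : D 1 = ({0, 1, 2} : Finset ℕ)) (hD2 : D 2 = ({0, 5, 6} : Finset ℕ))
    (hD : ∀ n, 3 ≤ n → D n = ({0, 3} : Finset ℕ))
    (hf : ∀ n, IsFiniteMeasure (muN p D n)) (t : ℝ) (n : ℕ) :
    charFun (muN p D (n + 2)) t * (2 ^ n * (Complex.exp (3 * t / 4 * Complex.I * (1 / 2) ^ n) - 1))
     = exM (Complex.exp (t / 4 * Complex.I)) * (Complex.exp (3 * t / 4 * Complex.I) - 1) := by
  induction n with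
  | zero => simp [ex_charFun_two p D hp hD1 hD2]
  | succ k ih =>
    rw [← ih]
    have hDk := hD (k + 2 + 1) (by omega)
    have f2 := ex_unifD_finite (D (k+2+1)) (by simp [hDk]) ((Pprod p (k+2+1) : ℝ)⁻¹)
    have e2 : muN p D (k + 1 + 2) = (muN p D (k+2)) ∗
      unifD (D (k+2+1)) ((Pprod p (k+2+1) : ℝ)⁻¹) := rfl
    rw [e2, charFun_conv, ex_charFun_unifD, hDk, ex_Pprod p hp]
    rw [Finset.sum_insert (by simp), Finset.sum_singleton]
    have h1 : (t : ℂ) * (((((2 ^ (k+2+1) : ℕ) : ℝ)⁻¹ : ℝ) : ℂ) * ((3 : ℕ) : ℂ)) * Complex.I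
        = 3 * t / 4 * Complex.I * (1 / 2) ^ (k + 1) := by
      push_cast
      rw [one_div, inv_pow]
      field_simp
      ring
    have h2 : Complex.exp (3 * t / 4 * Complex.I * (1 / 2) ^ k)
        = Complex.exp (3 * t / 4 * Complex.I * (1 / 2) ^ (k + 1)) ^ 2 := by
      rw [← Complex.exp_nat_mul]
      congr 1
      push_cast
      ring
    rw [h1, h2]
    simp
    ring

lemma ex_lim (c : ℂ) :
    Tendsto (fun n : ℕ => (2 : ℂ) ^ n * (Complex.exp (c * (1 / 2) ^ n) - 1)) atTop (𝓝 c) := by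
  have hd : HasDerivAt (fun z : ℂ => Complex.exp (c * z)) c 0 := by
    have := ((hasDerivAt_id (0 : ℂ)).const_mul c).cexp
    simpa using this
  have h1 := hd.tendsto_slope_zero
  have h2 : Tendsto (fun n : ℕ => ((1 : ℂ) / 2) ^ n) atTop (𝓝[≠] 0) := by
    refine tendsto_nhdsWithin_iff.2 ⟨?_, ?_⟩
    · exact tendsto_pow_atTop_nhds_zero_of_norm_lt_one (by norm_num)
    · exact Eventually.of_forall fun n => by simp
  have h3 := h1.comp h2
  refine h3.congr fun n => ?_
  simp

lemma ex_charFun_mu (p : ℕ → ℕ) (D : ℕ → Finset ℕ) (μ : Measure ℝ)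
    (hp : ∀ n, 1 ≤ n → p n = 2)
    (hD1 : D 1 = ({0, 1, 2} : Finset ℕ)) (hD2 : D 2 = ({0, 5, 6} : Finset ℕ))
    (hD : ∀ n, 3 ≤ n → D n = ({0, 3} : Finset ℕ))
    (hμ : IsMoran p D μ) (t : ℝ) :
    charFun μ t * (3 * t / 4 * Complex.I)
     = exM (Complex.exp (t / 4 * Complex.I)) * (Complex.exp (3 * t / 4 * Complex.I) - 1) := by
  have hf : ∀ n, IsFiniteMeasure (muN p D n) := ex_muN_finite p D (fun n hn => by
    rcases Nat.lt_or_ge n 3 with h | h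
    · interval_cases n
      · simp [hD1]
      · simp [hD2]
    · simp [hD n h])
  have := hμ.1
  have h1 := ((ex_charFun_tendsto _ μ hμ.2 t).comp (tendsto_add_atTop_nat 2)).mul
    (ex_lim (3 * t / 4 * Complex.I))
  refine tendsto_nhds_unique h1 ?_
  refine tendsto_const_nhds.congr fun n => ?_
  exact (ex_charFun_tel p D hp hD1 hD2 hD hf t n).symm

def exS : Finset ℕ := {0, 2, 4, 5, 6, 7, 8, 9, 10}

/-- The explicit form of the measure. -/
def exm : Measure ℝ :=
  ENNReal.ofReal (4 / 27) • ∑ a ∈ exS, volume.restrict (Set.Ioc ((a : ℝ) / 4) (((a : ℝ) + 3) / 4))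

instance : IsFiniteMeasure exm := by
  unfold exm
  exact Measure.smul_finite _ (by simp)

lemma ex_integral (f : ℝ → ℂ)
    (hf : ∀ a ∈ exS, IntegrableOn f (Set.Ioc ((a : ℝ) / 4) (((a : ℝ) + 3) / 4))) :
    ∫ x, f x ∂exm = (4 / 27) * ∑ a ∈ exS, ∫ x in Set.Ioc ((a : ℝ) / 4) (((a : ℝ) + 3) / 4), f x := by
  unfold exm
  rw [integral_smul_measure, integral_finsetSum_measure hf, ENNReal.toReal_ofReal (by norm_num)]
  rw [Complex.real_smul]
  norm_num

lemma ex_charFun_m (t : ℝ) :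
    charFun exm t * (3 * t / 4 * Complex.I)
     = exM (Complex.exp (t / 4 * Complex.I)) * (Complex.exp (3 * t / 4 * Complex.I) - 1) := by
  rcases eq_or_ne t 0 with rfl | ht
  · simp
  have hc : (t * Complex.I : ℂ) ≠ 0 := by simp [ht]
  rw [charFun_apply_real, ex_integral]
  · have h : ∀ a : ℕ, ∫ x in Set.Ioc ((a : ℝ) / 4) (((a : ℝ) + 3) / 4), Complex.exp (t * x * Complex.I)
        = (Complex.exp (t / 4 * Complex.I) ^ (a + 3) - Complex.exp (t / 4 * Complex.I) ^ a)
          / (t * Complex.I) := by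
      intro a
      rw [← intervalIntegral.integral_of_le (by linarith)]
      rw [← ex_exp_pow t (a + 3) (t * Complex.I * (((a + 3) / 4 : ℝ) : ℂ)) (by push_cast; ring),
        ← ex_exp_pow t a (t * Complex.I * ((a / 4 : ℝ) : ℂ)) (by push_cast; ring),
        ← integral_exp_mul_complex hc]
      congr 1
      ext x
      congr 1
      ring
    simp_rw [h]
    rw [ex_exp_pow t 3 (3 * t / 4 * Complex.I) (by push_cast; ring)]
    generalize Complex.exp (t / 4 * Complex.I) = u
    have ht' : (t : ℂ) ≠ 0 := by exact_mod_cast ht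
    simp only [exS, exM]
    simp
    field_simp
    ring
  · intro a _
    exact (Continuous.integrableOn_Icc (by fun_prop)).mono_set Set.Ioc_subset_Icc_self

lemma ex_mu_eq (μ : Measure ℝ) [IsProbabilityMeasure μ]
    (h : ∀ t : ℝ, charFun μ t * (3 * t / 4 * Complex.I)
     = exM (Complex.exp (t / 4 * Complex.I)) * (Complex.exp (3 * t / 4 * Complex.I) - 1)) :
    μ = exm := by
  apply Measure.ext_of_charFun
  ext t
  rcases eq_or_ne t 0 with rfl | ht
  · have : ∫ x : ℝ, (1 : ℂ) ∂exm = 1 := by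
      rw [ex_integral _ (fun a _ => by simp)]
      simp [exS]
      norm_num
    simp only [charFun_apply_real]
    simpa using this.symm
  · have hc : (3 * t / 4 * Complex.I : ℂ) ≠ 0 := by simp [ht]
    exact mul_right_cancel₀ hc ((h t).trans (ex_charFun_m t).symm)

lemma ex_zero (μ : Measure ℝ) 
    (h : ∀ t : ℝ, charFun μ t * (3 * t / 4 * Complex.I)
     = exM (Complex.exp (t / 4 * Complex.I)) * (Complex.exp (3 * t / 4 * Complex.I) - 1))
    (t : ℝ) (h0 : charFun μ t = 0) : Complex.exp (3 * t / 2 * Complex.I) = 1 := by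
  have h1 := h t
  rw [h0, zero_mul] at h1
  have hu : ‖Complex.exp (t / 4 * Complex.I)‖ = 1 := by
    have := Complex.norm_exp_ofReal_mul_I (t / 4)
    push_cast at this
    exact this
  rw [ex_exp_pow t 3 (3 * t / 4 * Complex.I) (by push_cast; ring)] at h1
  rw [ex_exp_pow t 6 (3 * t / 2 * Complex.I) (by push_cast; ring)]
  generalize Complex.exp (t / 4 * Complex.I) = u at *
  have hu0 : u ≠ 0 := by
    rintro rfl
    simp at hu
  rcases mul_eq_zero.1 h1.symm with h2 | h2
  · have h3 : (1 + u ^ 2 + u ^ 4) * (1 + u ^ 5 + u ^ 6) = 0 := by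
      simpa [exM] using h2
    rcases mul_eq_zero.1 h3 with h4 | h4
    · linear_combination (u ^ 2 - 1) * h4
    · have hcc : u * (starRingEnd ℂ) u = 1 := by
        rw [Complex.mul_conj, Complex.normSq_eq_norm_sq, hu]; simp
      have h5 := congrArg (starRingEnd ℂ) h4
      simp only [map_add, map_pow, map_one, map_zero] at h5
      generalize (starRingEnd ℂ) u = v at *
      have e5 : u ^ 5 * v ^ 5 = 1 := by rw [← mul_pow, hcc, one_pow]
      have h6 : u ^ 6 + u + 1 = 0 := by
        have e6 : u ^ 6 * v ^ 6 = 1 := by rw [← mul_pow, hcc, one_pow]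
        linear_combination u ^ 6 * h5 - u * e5 - e6
      have h7 : u * (u ^ 4 - 1) = 0 := by linear_combination h4 - h6
      have h8 : u ^ 4 - 1 = 0 := (mul_eq_zero.1 h7).resolve_left hu0
      have h9 : u ^ 2 + u + 1 = 0 := by linear_combination h6 - u ^ 2 * h8
      linear_combination (u - 1) * (u ^ 3 + 1) * h9
  · linear_combination (u ^ 3 + 1) * h2

def exA : Set ℝ := Set.Ioc 0 (1 / 4)
def exB : Set ℝ := Set.Ioc (3 / 2) (7 / 4)

def exg (x : ℝ) : ℂ := 3 * exA.indicator 1 x - exB.indicator 1 x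

lemma ex_ind (h : ℝ → ℂ) (a b c d : ℝ) :
    ∫ x in Set.Ioc a b, (Set.Ioc c d).indicator 1 x * h x = ∫ x in Set.Ioc (max a c) (min b d), h x := by
  have : (fun x => (Set.Ioc c d).indicator 1 x * h x) = (Set.Ioc c d).indicator h := by
    ext x
    by_cases hx : x ∈ Set.Ioc c d <;> simp [hx]
  rw [this, setIntegral_indicator measurableSet_Ioc, Set.Ioc_inter_Ioc]

lemma ex_key (h : ℝ → ℂ) (hh : Continuous h) (hper : ∀ x, h (x + 3 / 2) = h x) :
    ∫ x, exg x * h x ∂exm = 0 := by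
  have hI : ∀ a b c d : ℝ, IntegrableOn (fun x => (Set.Ioc c d).indicator 1 x * h x) (Set.Ioc a b) := by
    intro a b c d
    have : (fun x => (Set.Ioc c d).indicator 1 x * h x) = (Set.Ioc c d).indicator h := by
      ext x
      by_cases hx : x ∈ Set.Ioc c d <;> simp [hx]
    rw [this]
    exact ((hh.integrableOn_Icc).mono_set Set.Ioc_subset_Icc_self).indicator measurableSet_Ioc
  have e : (fun x => exg x * h x) = fun x => 3 * ((Set.Ioc 0 (1 / 4)).indicator 1 x * h x)
      - (Set.Ioc (3 / 2) (7 / 4)).indicator 1 x * h x := by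
    ext x
    simp only [exg, exA, exB]
    ring
  rw [e, ex_integral]
  · have hs : ∀ a : ℕ, ∫ x in Set.Ioc ((a : ℝ) / 4) (((a : ℝ) + 3) / 4),
        (3 * ((Set.Ioc 0 (1 / 4)).indicator 1 x * h x)
      - (Set.Ioc (3 / 2) (7 / 4)).indicator 1 x * h x) =
      3 * (∫ x in Set.Ioc (max ((a : ℝ) / 4) 0) (min (((a : ℝ) + 3) / 4) (1 / 4)), h x)
      - ∫ x in Set.Ioc (max ((a : ℝ) / 4) (3 / 2)) (min (((a : ℝ) + 3) / 4) (7 / 4)), h x := by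
      intro a
      rw [integral_sub ((hI _ _ _ _).const_mul 3) (hI _ _ _ _), integral_const_mul, ex_ind h,
        ex_ind h]
    simp_rw [hs]
    have hsh : ∫ x in Set.Ioc (3 / 2 : ℝ) (7 / 4), h x = ∫ x in Set.Ioc (0 : ℝ) (1 / 4), h x := by
      rw [← intervalIntegral.integral_of_le (by norm_num),
        ← intervalIntegral.integral_of_le (by norm_num)]
      have := intervalIntegral.integral_comp_add_right (a := 0) (b := 1 / 4) h (3 / 2)
      simp_rw [hper] at this
      rw [this]
      norm_num
    have hsum : ∀ F : ℕ → ℂ, ∑ a ∈ exS, F a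
        = F 0 + F 2 + F 4 + F 5 + F 6 + F 7 + F 8 + F 9 + F 10 := by
      intro F
      simp [exS]
      ring
    rw [hsum]
    have z : ∀ a b : ℝ, b ≤ a → ∫ x in Set.Ioc a b, h x = 0 := by
      intro a b hab
      rw [Set.Ioc_eq_empty (not_lt.2 hab)]
      simp
    norm_num [hsh, z]
    try ring
  · intro a _
    exact ((hI _ _ _ _).const_mul 3).sub (hI _ _ _ _)

lemma ex_g_memLp : MemLp exg 2 exm := by
  have hm : Measurable exg := by
    unfold exg
    have h1 : Measurable (exA.indicator (1 : ℝ → ℂ)) := measurable_one.indicator measurableSet_Ioc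
    have h2 : Measurable (exB.indicator (1 : ℝ → ℂ)) := measurable_one.indicator measurableSet_Ioc
    exact (h1.const_mul 3).sub h2
  refine MemLp.of_bound hm.aestronglyMeasurable 4 (ae_of_all _ fun x => ?_)
  unfold exg
  by_cases h1 : x ∈ exA <;> by_cases h2 : x ∈ exB <;> simp [h1, h2] <;> norm_num

lemma ex_A_pos : exm exA ≠ 0 := by
  unfold exm
  rw [Measure.smul_apply, Measure.finsetSum_apply]
  simp only [smul_eq_mul]
  refine mul_ne_zero (by simp) ?_
  intro hz
  rw [Finset.sum_eq_zero_iff] at hz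
  have := hz 0 (by simp [exS])
  rw [exA, Measure.restrict_apply measurableSet_Ioc, Set.Ioc_inter_Ioc] at this
  norm_num at this

/-- Example 5.3. With `p_n = 2`, `D_1 = {0,1,2}`, `D_2 = {0,5,6}`,
`D_n = {0,3}` for `n ≥ 3`, the Moran measure is not spectral. -/
theorem example_not_spectral (p : ℕ → ℕ) (D : ℕ → Finset ℕ) (μ : Measure ℝ)
    (hp : ∀ n, 1 ≤ n → p n = 2)
    (hD1 : D 1 = ({0, 1, 2} : Finset ℕ)) (hD2 : D 2 = ({0, 5, 6} : Finset ℕ))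
    (hD : ∀ n, 3 ≤ n → D n = ({0, 3} : Finset ℕ))
    (hμ : IsMoran p D μ) : ¬ IsSpectralMeasure μ := by
  rintro ⟨Λ, -, horth, hcomp⟩
  have hprob := hμ.1
  have hchar := ex_charFun_mu p D μ hp hD1 hD2 hD hμ
  have hper : ∀ l ∈ Λ, ∀ l' ∈ Λ,
      Complex.exp (3 * ((2 * π * (l - l') : ℝ) : ℂ) / 2 * Complex.I) = 1 := by
    intro l hl l' hl'
    rcases eq_or_ne l l' with rfl | hne
    · simp
    · refine ex_zero μ hchar _ ?_
      rw [charFun_apply_real, ← horth l hl l' hl' hne]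
      congr 1
      ext x
      congr 1
      push_cast
      ring
  obtain ⟨l0, hl0⟩ : ∃ l0 : ℝ, ∀ l ∈ Λ,
      Complex.exp (3 * ((2 * π * (l0 - l) : ℝ) : ℂ) / 2 * Complex.I) = 1 := by
    rcases Λ.eq_empty_or_nonempty with h | ⟨l0, h0⟩
    · exact ⟨0, by simp [h]⟩
    · exact ⟨l0, fun l hl => hper l0 h0 l hl⟩
  have hmu := ex_mu_eq μ hchar
  subst hmu
  have hz := hcomp (fun x => Complex.exp (2 * π * Complex.I * l0 * x) * exg x) ?_ ?_
  · apply ex_A_pos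
    refine measure_mono_null (fun x hx => ?_) (ae_iff.1 hz)
    have hB : x ∉ exB := by
      simp only [exA, exB, Set.mem_Ioc] at hx ⊢
      rintro ⟨h1, h2⟩
      linarith [hx.2]
    simp [exg, hx, hB]
  · refine (ex_g_memLp).of_le ?_ (ae_of_all _ fun x => ?_)
    · exact (Continuous.aestronglyMeasurable (by fun_prop)).mul ex_g_memLp.1
    · have : Complex.exp (2 * π * Complex.I * l0 * x)
          = Complex.exp (((2 * π * l0 * x : ℝ) : ℂ) * Complex.I) := by
        congr 1
        push_cast
        ring
      rw [norm_mul, this, Complex.norm_exp_ofReal_mul_I, one_mul]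
  · intro l hl
    rw [← ex_key (fun x => Complex.exp (2 * π * Complex.I * (l0 - l) * x)) (by fun_prop) ?_]
    · congr 1
      ext x
      rw [mul_comm (Complex.exp _) (exg x), mul_assoc, ← Complex.exp_add]
      congr 2
      ring
    · intro x
      have e1 : 2 * π * Complex.I * (l0 - l) * ((x + 3 / 2 : ℝ) : ℂ)
          = 2 * π * Complex.I * (l0 - l) * x + 3 * ((2 * π * (l0 - l) : ℝ) : ℂ) / 2 * Complex.I := by
        push_cast
        ring
      rw [e1, Complex.exp_add, hl0 l hl, mul_one]

end
end
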